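/- Let ε, λ, β > 0 and let W(x) = ε/(2λ) + |x|^{−ε}. Let r > 0 be such that λW(x) − W''(x) + x|x|^ε W'(x) ≤ 0 for all |x| ≥ r. If u : ℝ → ℝ is a bounded twice continuously differentiable function satisfying λu(x) − u''(x) + x|x|^ε u'(x) ≥ 0 for all |x| ≥ r, and u(r) ≥ βW(r) and u(−r) ≥ βW(−r), then u(x) ≥ βW(x) for every x with |x| ≥ r. -/

import Mathlib

open Set Filter

noncomputable section

/-!
Write `L ψ = λψ - ψ'' + bψ'`. At a local minimum `ψ' = 0 ≤ ψ''`, so `L ψ ≤ λψ` there; hence a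
function with `L ψ ≥ 0` has no negative interior minimum, and it is nonnegative as soon as it is
nonnegative on the boundary and near infinity. A function `w` that is merely bounded below is
brought into this situation by adding `δV`, where `V` tends to infinity and `L V ≥ 0`, and then
letting `δ → 0⁺`. If `x b(x) ≥ 0`, then `V(x) = x² + 2/λ` works, since
`L V = λx² + 2x b(x)`. The comparison estimate is the case `w = u - βW`.
-/

open scoped Topology

/-- The operator `λ - A` for `A ψ = ψ'' - b ψ'`, so that `0 ≤ ellipticOp lam b ψ x` says that `ψ`
is a supersolution at `x`. The derivatives are `deriv`, hence meaningful only where `ψ` is twice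
differentiable. -/
def ellipticOp (lam : ℝ) (b ψ : ℝ → ℝ) (x : ℝ) : ℝ :=
  lam * ψ x - deriv (deriv ψ) x + b x * deriv ψ x

section MaximumPrinciple

theorem deriv_deriv_nonneg_of_isLocalMin {f : ℝ → ℝ} {x : ℝ} (hmin : IsLocalMin f x)
    (hf : ContinuousAt f x) : 0 ≤ deriv (deriv f) x := by
  by_contra! hneg
  have hmax : IsLocalMax f x := isLocalMax_of_deriv_deriv_neg hneg hmin.deriv_eq_zero hf
  have hconst : f =ᶠ[𝓝 x] fun _ ↦ f x := by
    filter_upwards [hmin, hmax] with y hy hy' using le_antisymm hy' hy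
  have hzero : deriv (deriv f) x = 0 := by simpa using hconst.deriv.deriv_eq
  exact hneg.ne hzero

variable {lam : ℝ} {b : ℝ → ℝ} {U : Set ℝ}

theorem ellipticOp_le_of_isLocalMin {f : ℝ → ℝ} {x : ℝ} (hmin : IsLocalMin f x)
    (hf : ContinuousAt f x) : ellipticOp lam b f x ≤ lam * f x := by
  have hf'' := deriv_deriv_nonneg_of_isLocalMin hmin hf
  rw [ellipticOp, hmin.deriv_eq_zero]
  linarith

theorem ellipticOp_add_const_mul {f g : ℝ → ℝ} {x : ℝ} (c : ℝ) (hf : ContDiffAt ℝ 2 f x)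
    (hg : ContDiffAt ℝ 2 g x) :
    ellipticOp lam b (fun y ↦ f y + c * g y) x =
      ellipticOp lam b f x + c * ellipticOp lam b g x := by
  have hcg : ContDiffAt ℝ 2 (fun y ↦ c * g y) x := contDiffAt_const.mul hg
  have hderiv : deriv (fun y ↦ f y + c * g y) x = deriv f x + c * deriv g x := by
    rw [deriv_fun_add (hf.differentiableAt two_ne_zero) (hcg.differentiableAt two_ne_zero),
      deriv_const_mul_field]
  have hderiv₂ : deriv (deriv fun y ↦ f y + c * g y) x =
      deriv (deriv f) x + c * deriv (deriv g) x := by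
    simpa only [iteratedDeriv_const_mul_field, iteratedDeriv_succ, iteratedDeriv_zero]
      using iteratedDeriv_fun_add (n := 2) hf hcg
  rw [ellipticOp, ellipticOp, ellipticOp, hderiv, hderiv₂]
  ring

theorem nonneg_of_ellipticOp_nonneg (hlam : 0 < lam) (hU : IsOpen U) {f : ℝ → ℝ}
    (hf : ContinuousOn f (closure U)) (hLf : ∀ x ∈ U, 0 ≤ ellipticOp lam b f x)
    (hbdry : ∀ x ∈ frontier U, 0 ≤ f x)
    (hinfty : ∀ᶠ x in cocompact ℝ ⊓ 𝓟 (closure U), 0 ≤ f x) :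
    ∀ x ∈ U, 0 ≤ f x := by
  intro p hp
  by_contra! hneg
  obtain ⟨x, hx, hmin⟩ := hf.exists_isMinOn' isClosed_closure (subset_closure hp)
    (hinfty.mono fun y hy ↦ hneg.le.trans hy)
  have hfx : f x < 0 := (hmin (subset_closure hp)).trans_lt hneg
  have hxU : x ∈ U := by
    by_contra hxU
    exact hfx.not_ge (hbdry x (hU.frontier_eq ▸ ⟨hx, hxU⟩))
  have hnhds : closure U ∈ 𝓝 x := mem_of_superset (hU.mem_nhds hxU) subset_closure
  have hle := ellipticOp_le_of_isLocalMin (lam := lam) (b := b) (hmin.isLocalMin hnhds)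
    (hf.continuousAt hnhds)
  exact (mul_neg_of_pos_of_neg hlam hfx).not_ge ((hLf x hxU).trans hle)

theorem nonneg_of_ellipticOp_nonneg_of_lyapunov (hlam : 0 < lam) (hU : IsOpen U) {V w : ℝ → ℝ}
    (hV : ContinuousOn V (closure U)) (hV₂ : ∀ x ∈ U, ContDiffAt ℝ 2 V x)
    (hLV : ∀ x ∈ U, 0 ≤ ellipticOp lam b V x) (hVbdry : ∀ x ∈ frontier U, 0 ≤ V x)
    (hVinfty : Tendsto V (cocompact ℝ ⊓ 𝓟 (closure U)) atTop)
    (hw : ContinuousOn w (closure U)) (hw₂ : ∀ x ∈ U, ContDiffAt ℝ 2 w x)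
    (hLw : ∀ x ∈ U, 0 ≤ ellipticOp lam b w x) (hwbdry : ∀ x ∈ frontier U, 0 ≤ w x)
    {m : ℝ} (hm : ∀ x ∈ closure U, m ≤ w x) :
    ∀ x ∈ U, 0 ≤ w x := by
  have hperturbed : ∀ δ > 0, ∀ x ∈ U, 0 ≤ w x + δ * V x := by
    intro δ hδ
    refine nonneg_of_ellipticOp_nonneg (b := b) hlam hU
      (hw.add (continuousOn_const.mul hV)) ?_ ?_ ?_
    · intro x hx
      rw [ellipticOp_add_const_mul δ (hw₂ x hx) (hV₂ x hx)]
      exact add_nonneg (hLw x hx) (mul_nonneg hδ.le (hLV x hx))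
    · exact fun x hx ↦ add_nonneg (hwbdry x hx) (mul_nonneg hδ.le (hVbdry x hx))
    · filter_upwards [(hVinfty.const_mul_atTop hδ).eventually_ge_atTop (-m),
        mem_inf_of_right (mem_principal_self _)] with x hVx hx
      linarith [hm x hx]
  intro x hx
  have hlim : Tendsto (fun δ ↦ w x + δ * V x) (𝓝[>] 0) (𝓝 (w x)) := by
    have hcont : Continuous fun δ : ℝ ↦ w x + δ * V x := by fun_prop
    simpa using (hcont.tendsto 0).mono_left nhdsWithin_le_nhds
  exact ge_of_tendsto hlim (eventually_mem_nhdsWithin.mono fun δ hδ ↦ hperturbed δ hδ x hx)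

end MaximumPrinciple

section QuadraticLyapunov

theorem tendsto_sq_add_const_cocompact_atTop (K : ℝ) :
    Tendsto (fun x : ℝ ↦ x ^ 2 + K) (cocompact ℝ) atTop := by
  have hsq := (tendsto_pow_atTop two_ne_zero).comp (tendsto_norm_cocompact_atTop (E := ℝ))
  simpa [Function.comp_def] using tendsto_atTop_add_const_right _ K hsq

theorem ellipticOp_sq_add_const (lam K : ℝ) (b : ℝ → ℝ) (x : ℝ) :
    ellipticOp lam b (fun y ↦ y ^ 2 + K) x = lam * (x ^ 2 + K) - 2 + 2 * (x * b x) := by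
  have hderiv : deriv (fun y : ℝ ↦ y ^ 2 + K) = fun y ↦ 2 * y := by ext; simp
  rw [ellipticOp, hderiv, deriv_const_mul_field, deriv_id'']
  ring

theorem nonneg_of_ellipticOp_nonneg_of_inward_drift {lam : ℝ} {b : ℝ → ℝ} {U : Set ℝ}
    (hlam : 0 < lam) (hU : IsOpen U) (hb : ∀ x ∈ U, 0 ≤ x * b x) {w : ℝ → ℝ}
    (hw : ContinuousOn w (closure U)) (hw₂ : ∀ x ∈ U, ContDiffAt ℝ 2 w x)
    (hLw : ∀ x ∈ U, 0 ≤ ellipticOp lam b w x) (hwbdry : ∀ x ∈ frontier U, 0 ≤ w x)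
    {m : ℝ} (hm : ∀ x ∈ closure U, m ≤ w x) :
    ∀ x ∈ U, 0 ≤ w x := by
  have hVsmooth : ContDiff ℝ 2 fun x : ℝ ↦ x ^ 2 + 2 / lam := by fun_prop
  have hLV : ∀ x ∈ U, 0 ≤ ellipticOp lam b (fun y ↦ y ^ 2 + 2 / lam) x := by
    intro x hx
    have hxb := hb x hx
    calc 0 ≤ lam * x ^ 2 + 2 * (x * b x) := by positivity
      _ = ellipticOp lam b (fun y ↦ y ^ 2 + 2 / lam) x := by
        rw [ellipticOp_sq_add_const]
        field_simp
        ring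
  exact nonneg_of_ellipticOp_nonneg_of_lyapunov hlam hU hVsmooth.continuous.continuousOn
    (fun x _ ↦ hVsmooth.contDiffAt) hLV (fun x _ ↦ by positivity)
    ((tendsto_sq_add_const_cocompact_atTop _).mono_left inf_le_left) hw hw₂ hLw hwbdry hm

end QuadraticLyapunov

theorem mul_mul_abs_rpow_nonneg (x p : ℝ) : 0 ≤ x * (x * |x| ^ p) := by
  rw [← mul_assoc]
  exact mul_nonneg (mul_self_nonneg x) (by positivity)

theorem contDiffAt_const_add_abs_rpow (a p : ℝ) {x : ℝ} (hx : x ≠ 0) {n : ℕ∞} :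
    ContDiffAt ℝ n (fun y : ℝ ↦ a + |y| ^ p) x :=
  contDiffAt_const.add ((contDiffAt_abs hx).rpow_const_of_ne (abs_ne_zero.mpr hx))

theorem exterior_comparison_estimate_general {lam β r : ℝ} {b u W : ℝ → ℝ} (hlam : 0 < lam)
    (hβ : 0 ≤ β) (hb : ∀ x, r < |x| → 0 ≤ x * b x)
    (hW : ContinuousOn W {x | r ≤ |x|}) (hW₂ : ∀ x, r < |x| → ContDiffAt ℝ 2 W x)
    {C : ℝ} (hWC : ∀ x, r ≤ |x| → W x ≤ C) (hWsub : ∀ x, r < |x| → ellipticOp lam b W x ≤ 0)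
    (hu : ContinuousOn u {x | r ≤ |x|}) (hu₂ : ∀ x, r < |x| → ContDiffAt ℝ 2 u x)
    {m : ℝ} (hum : ∀ x, r ≤ |x| → m ≤ u x) (husuper : ∀ x, r < |x| → 0 ≤ ellipticOp lam b u x)
    (hbdry₁ : β * W r ≤ u r) (hbdry₂ : β * W (-r) ≤ u (-r)) :
    ∀ x, r ≤ |x| → β * W x ≤ u x := by
  have hbdry : ∀ x, r = |x| → β * W x ≤ u x := by
    rintro x rfl
    rcases abs_choice x with h | h <;> simp_all
  have hclosure : closure {x : ℝ | r < |x|} ⊆ {x | r ≤ |x|} :=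
    closure_lt_subset_le continuous_const continuous_abs
  have hfrontier : frontier {x : ℝ | r < |x|} ⊆ {x | r = |x|} :=
    frontier_lt_subset_eq continuous_const continuous_abs
  have hnonneg : ∀ x ∈ {x : ℝ | r < |x|}, 0 ≤ u x + -β * W x := by
    refine nonneg_of_ellipticOp_nonneg_of_inward_drift hlam
      (isOpen_lt continuous_const continuous_abs) hb
      ((hu.add (continuousOn_const.mul hW)).mono hclosure)
      (fun x hx ↦ (hu₂ x hx).add (contDiffAt_const.mul (hW₂ x hx))) (fun x hx ↦ ?_)
      (fun x hx ↦ by linarith [hbdry x (hfrontier hx)]) (m := m - β * C) (fun x hx ↦ ?_)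
    · rw [ellipticOp_add_const_mul (-β) (hu₂ x hx) (hW₂ x hx)]
      linarith [husuper x hx, mul_nonpos_of_nonneg_of_nonpos hβ (hWsub x hx)]
    · linarith [hum x (hclosure hx), mul_le_mul_of_nonneg_left (hWC x (hclosure hx)) hβ]
  intro x hx
  rcases hx.eq_or_lt with hx | hx
  · exact hbdry x hx
  · linarith [hnonneg x hx]

/-- comparison estimate on the exterior domain `{|x| ≥ r}` for the operator
`Aψ = ψ'' − x|x|^ε ψ'` with barrier `W(x) = ε/(2λ) + |x|^{−ε}`. -/
theorem exterior_comparison_estimate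
    (ε lam β : ℝ) (hε : 0 < ε) (hlam : 0 < lam) (hβ : 0 < β)
    (W : ℝ → ℝ) (hW : W = fun x : ℝ => ε / (2 * lam) + |x| ^ (-ε))
    (r : ℝ) (hr : 0 < r)
    (hWsub : ∀ x : ℝ, r ≤ |x| →
      lam * W x - deriv (deriv W) x + x * |x| ^ ε * deriv W x ≤ 0)
    (u : ℝ → ℝ) (hu : ContDiff ℝ 2 u) (hub : ∃ M, ∀ x, |u x| ≤ M)
    (husuper : ∀ x : ℝ, r ≤ |x| →
      0 ≤ lam * u x - deriv (deriv u) x + x * |x| ^ ε * deriv u x)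
    (hbdry₁ : β * W r ≤ u r) (hbdry₂ : β * W (-r) ≤ u (-r)) :
    ∀ x : ℝ, r ≤ |x| → β * W x ≤ u x := by
  obtain ⟨M, hM⟩ := hub
  have hW₂ (x : ℝ) (hx : r ≤ |x|) : ContDiffAt ℝ 2 W x :=
    hW ▸ contDiffAt_const_add_abs_rpow _ _ (abs_pos.mp (hr.trans_le hx))
  have hWC (x : ℝ) (hx : r ≤ |x|) : W x ≤ ε / (2 * lam) + r ^ (-ε) := by
    simpa [hW] using Real.rpow_le_rpow_of_nonpos hr hx (neg_nonpos.mpr hε.le)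
  exact exterior_comparison_estimate_general hlam hβ.le (fun x _ ↦ mul_mul_abs_rpow_nonneg x ε)
    (fun x hx ↦ (hW₂ x hx).continuousAt.continuousWithinAt) (fun x hx ↦ hW₂ x hx.le) hWC
    (fun x hx ↦ hWsub x hx.le) hu.continuous.continuousOn (fun _ _ ↦ hu.contDiffAt)
    (fun x _ ↦ neg_le_of_abs_le (hM x)) (fun x hx ↦ husuper x hx.le) hbdry₁ hbdry₂
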